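/- Let R = R₀ ⊕ R₁ be a Z₂-graded commutative ring and Q a Z₂-graded ideal of R. Then Q is a Z₂-graded maximal ideal of R if and only if either (1) Q = p + R₁ where p is a maximal ideal of R₀ containing R₁², or (2) Q = (R' :_{R₀} R₁) + R' where R' is a maximal R₀-submodule of R₁ with R₁³ ⊄ R'. -/

import Mathlib

/-- A `ℤ/2ℤ`-grading on a commutative ring `R`: additive subgroups `R0`, `R1` with
`R = R0 ⊕ R1` (internal direct sum) and `Rᵢ · Rⱼ ⊆ R_{i+j}`. -/
structure Z2Grading (R : Type*) [CommRing R] where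
  R0 : AddSubgroup R
  R1 : AddSubgroup R
  one_mem : (1 : R) ∈ R0
  mul_mem_00 : ∀ {a b : R}, a ∈ R0 → b ∈ R0 → a * b ∈ R0
  mul_mem_01 : ∀ {a b : R}, a ∈ R0 → b ∈ R1 → a * b ∈ R1
  mul_mem_11 : ∀ {a b : R}, a ∈ R1 → b ∈ R1 → a * b ∈ R0
  sup_eq_top : R0 ⊔ R1 = ⊤
  inf_eq_bot : R0 ⊓ R1 = ⊥

/-- The sum `S + T` of two subsets of `R`. -/
def setSum {R : Type*} [CommRing R] (S T : Set R) : Set R :=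
  {z : R | ∃ a ∈ S, ∃ b ∈ T, z = a + b}

/-- The additive subgroup of `R` generated by the pairwise products of `S` and `T`
(i.e. the product `S·T` of an ideal/submodule pair). -/
def mulSet {R : Type*} [CommRing R] (S T : Set R) : AddSubgroup R :=
  AddSubgroup.closure {x : R | ∃ a ∈ S, ∃ b ∈ T, x = a * b}

namespace Z2Grading

variable {R : Type*} [CommRing R] (G : Z2Grading R)

/-- The set of homogeneous elements of `R`, namely `R₀ ∪ R₁`. -/
def homogeneous : Set R := ↑G.R0 ∪ ↑G.R1

/-- `R₁²`, the ideal of `R₀` generated by the products of two elements of `R₁`. -/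
def sq : AddSubgroup R := mulSet (↑G.R1) (↑G.R1)

/-- `R₁³ = R₁² · R₁`, an `R₀`-submodule of `R₁`. -/
def cube : AddSubgroup R := mulSet (↑G.sq) (↑G.R1)

/-- `I` is an ideal of the subring `R₀` (viewed inside `R`). -/
def IsIdeal0 (I : AddSubgroup R) : Prop :=
  (I : Set R) ⊆ ↑G.R0 ∧ ∀ a ∈ G.R0, ∀ x ∈ I, a * x ∈ I

/-- `N` is an `R₀`-submodule of `R₁` (viewed inside `R`). -/
def IsSubmodule1 (N : AddSubgroup R) : Prop :=
  (N : Set R) ⊆ ↑G.R1 ∧ ∀ a ∈ G.R0, ∀ x ∈ N, a * x ∈ N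

/-- The residual `(N :_{R₀} R₁) = {a ∈ R₀ : a·R₁ ⊆ N}`. -/
def residual (N : AddSubgroup R) : AddSubgroup R where
  carrier := {a : R | a ∈ G.R0 ∧ ∀ r ∈ G.R1, a * r ∈ N}
  zero_mem' := ⟨G.R0.zero_mem, fun r _ => by simpa using N.zero_mem⟩
  add_mem' := by
    rintro a b ⟨ha0, ha⟩ ⟨hb0, hb⟩
    exact ⟨G.R0.add_mem ha0 hb0, fun r hr => by
      rw [add_mul]; exact N.add_mem (ha r hr) (hb r hr)⟩
  neg_mem' := by
    rintro a ⟨ha0, ha⟩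
    exact ⟨G.R0.neg_mem ha0, fun r hr => by
      rw [neg_mul]; exact N.neg_mem (ha r hr)⟩

/-- `J` is a `ℤ₂`-graded ideal of `R`: the homogeneous components of each of its
elements again belong to `J`, i.e. `J = (J ∩ R₀) ⊕ (J ∩ R₁)`. -/
def IsGradedIdeal (J : Ideal R) : Prop :=
  ∀ x ∈ J, ∃ a b : R, a ∈ G.R0 ∧ b ∈ G.R1 ∧ a ∈ J ∧ b ∈ J ∧ x = a + b

/-- `J` is a `ℤ₂`-graded prime ideal of `R`. -/
def IsGradedPrime (J : Ideal R) : Prop :=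
  G.IsGradedIdeal J ∧ J ≠ ⊤ ∧
    ∀ r ∈ G.homogeneous, ∀ s ∈ G.homogeneous, r * s ∈ J → r ∈ J ∨ s ∈ J

/-- `J` is a `ℤ₂`-graded maximal ideal of `R`. -/
def IsGradedMaximal (J : Ideal R) : Prop :=
  G.IsGradedIdeal J ∧ J ≠ ⊤ ∧
    ∀ J' : Ideal R, G.IsGradedIdeal J' → J ≤ J' → J' = J ∨ J' = ⊤

/-- `p` is a prime ideal of the subring `R₀`. -/
def IsPrime0 (p : AddSubgroup R) : Prop :=
  G.IsIdeal0 p ∧ (p : Set R) ≠ ↑G.R0 ∧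
    ∀ a ∈ G.R0, ∀ b ∈ G.R0, a * b ∈ p → a ∈ p ∨ b ∈ p

/-- `p` is a maximal ideal of the subring `R₀`. -/
def IsMaximal0 (p : AddSubgroup R) : Prop :=
  G.IsIdeal0 p ∧ (p : Set R) ≠ ↑G.R0 ∧
    ∀ I : AddSubgroup R, G.IsIdeal0 I → p ≤ I → (I : Set R) = ↑p ∨ (I : Set R) = ↑G.R0

/-- `N` is a prime `R₀`-submodule of `R₁`. -/
def IsPrimeSubmodule1 (N : AddSubgroup R) : Prop :=
  G.IsSubmodule1 N ∧ (N : Set R) ≠ ↑G.R1 ∧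
    ∀ a ∈ G.R0, ∀ m ∈ G.R1, a * m ∈ N → a ∈ G.residual N ∨ m ∈ N

/-- `N` is a maximal (proper) `R₀`-submodule of `R₁`. -/
def IsMaximalSubmodule1 (N : AddSubgroup R) : Prop :=
  G.IsSubmodule1 N ∧ (N : Set R) ≠ ↑G.R1 ∧
    ∀ N' : AddSubgroup R, G.IsSubmodule1 N' → N ≤ N' →
      (N' : Set R) = ↑N ∨ (N' : Set R) = ↑G.R1

/-- `R` is a `ℤ₂`-graded integral domain. -/
def IsGradedDomain : Prop :=
  (1 : R) ≠ 0 ∧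
    ∀ r ∈ G.homogeneous, ∀ s ∈ G.homogeneous, r * s = 0 → r = 0 ∨ s = 0

/-- `R` is a `ℤ₂`-graded field. -/
def IsGradedField : Prop :=
  (1 : R) ≠ 0 ∧ ∀ r ∈ G.homogeneous, r ≠ 0 → IsUnit r

/-- `R₀` as a subring of `R`. -/
def toSubring : Subring R where
  carrier := ↑G.R0
  one_mem' := G.one_mem
  mul_mem' := fun ha hb => G.mul_mem_00 ha hb
  zero_mem' := G.R0.zero_mem
  add_mem' := fun ha hb => G.R0.add_mem ha hb
  neg_mem' := fun ha => G.R0.neg_mem ha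

/-- The Zariski topology on the homogeneous spectrum `Z₂Spec R`: closed sets are the
`V(I) = {P : I ⊆ P}` for `ℤ₂`-graded ideals `I`. -/
def gradedZariski : TopologicalSpace {Q : Ideal R // G.IsGradedPrime Q} :=
  TopologicalSpace.generateFrom
    {U : Set {Q : Ideal R // G.IsGradedPrime Q} |
      ∃ I : Ideal R, G.IsGradedIdeal I ∧ U = {P | ¬ I ≤ P.1}}

end Z2Grading

namespace Z2Grading

variable {R : Type*} [CommRing R] (G : Z2Grading R)

theorem aux_decomp (x : R) : ∃ a ∈ G.R0, ∃ b ∈ G.R1, a + b = x := by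
  have h : x ∈ G.R0 ⊔ G.R1 := by rw [G.sup_eq_top]; trivial
  exact AddSubgroup.mem_sup.1 h

theorem aux_zero {x : R} (h0 : x ∈ G.R0) (h1 : x ∈ G.R1) : x = 0 := by
  have h : x ∈ G.R0 ⊓ G.R1 := ⟨h0, h1⟩
  rw [G.inf_eq_bot] at h
  exact h

/-- the ideal `I + N` -/
def mkIdeal (I N : AddSubgroup R) (hI : G.IsIdeal0 I) (hN : G.IsSubmodule1 N)
    (h1 : ∀ a ∈ I, ∀ r ∈ G.R1, a * r ∈ N) (h2 : ∀ n ∈ N, ∀ r ∈ G.R1, n * r ∈ I) : Ideal R where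
  carrier := setSum ↑I ↑N
  zero_mem' := ⟨0, I.zero_mem, 0, N.zero_mem, by simp⟩
  add_mem' := by
    rintro _ _ ⟨a, ha, b, hb, rfl⟩ ⟨c, hc, d, hd, rfl⟩
    exact ⟨a + c, I.add_mem ha hc, b + d, N.add_mem hb hd, by ring⟩
  smul_mem' := by
    rintro x _ ⟨a, ha, b, hb, rfl⟩
    obtain ⟨u, hu, v, hv, rfl⟩ := G.aux_decomp x
    exact ⟨u * a + b * v, I.add_mem (hI.2 u hu a ha) (h2 b hb v hv),
      u * b + a * v, N.add_mem (hN.2 u hu b hb) (h1 a ha v hv), by simp only [smul_eq_mul]; ring⟩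

theorem mem_mkIdeal {I N : AddSubgroup R} {hI : G.IsIdeal0 I} {hN : G.IsSubmodule1 N}
    {h1 : ∀ a ∈ I, ∀ r ∈ G.R1, a * r ∈ N} {h2 : ∀ n ∈ N, ∀ r ∈ G.R1, n * r ∈ I} {x : R} :
    x ∈ G.mkIdeal I N hI hN h1 h2 ↔ x ∈ setSum (I : Set R) (N : Set R) := Iff.rfl

theorem aux_left {S T : Set R} (hS : S ⊆ G.R0) (hT : T ⊆ G.R1) {x : R} (hx : x ∈ G.R0)
    (h : x ∈ setSum S T) : x ∈ S := by
  obtain ⟨a, ha, b, hb, rfl⟩ := h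
  have : b = 0 := G.aux_zero (by simpa using G.R0.sub_mem hx (hS ha)) (hT hb)
  simpa [this] using ha

theorem aux_right {S T : Set R} (hS : S ⊆ G.R0) (hT : T ⊆ G.R1) {x : R} (hx : x ∈ G.R1)
    (h : x ∈ setSum S T) : x ∈ T := by
  obtain ⟨a, ha, b, hb, rfl⟩ := h
  have : a = 0 := G.aux_zero (hS ha) (by simpa using G.R1.sub_mem hx (hT hb))
  simpa [this] using hb

theorem mkIdeal_graded (I N : AddSubgroup R) (hI : G.IsIdeal0 I) (hN : G.IsSubmodule1 N)
    (h1 : ∀ a ∈ I, ∀ r ∈ G.R1, a * r ∈ N) (h2 : ∀ n ∈ N, ∀ r ∈ G.R1, n * r ∈ I) :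
    G.IsGradedIdeal (G.mkIdeal I N hI hN h1 h2) := by
  rintro _ ⟨a, ha, b, hb, rfl⟩
  exact ⟨a, b, hI.1 ha, hN.1 hb, ⟨a, ha, 0, N.zero_mem, by simp⟩,
    ⟨0, I.zero_mem, b, hb, by simp⟩, rfl⟩

theorem residual_ideal (N : AddSubgroup R) (hN : G.IsSubmodule1 N) :
    G.IsIdeal0 (G.residual N) :=
  ⟨fun _ h => h.1, fun a ha x hx => ⟨G.mul_mem_00 ha hx.1, fun r hr => by
    rw [mul_assoc]; exact hN.2 a ha _ (hx.2 r hr)⟩⟩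

theorem residual_mul (N : AddSubgroup R) (hN : G.IsSubmodule1 N) :
    ∀ n ∈ N, ∀ r ∈ G.R1, n * r ∈ G.residual N := fun n hn r hr =>
  ⟨G.mul_mem_11 (hN.1 hn) hr, fun s hs => by
    rw [mul_assoc, mul_comm]; exact hN.2 _ (G.mul_mem_11 hr hs) _ hn⟩

/-- the ideal `(N : R₁) + N` -/
def resIdeal (N : AddSubgroup R) (hN : G.IsSubmodule1 N) : Ideal R :=
  G.mkIdeal (G.residual N) N (G.residual_ideal N hN) hN (fun _ ha r hr => ha.2 r hr)
    (G.residual_mul N hN)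

theorem R1_sub : G.IsSubmodule1 G.R1 := ⟨fun _ h => h, fun _ ha _ hx => G.mul_mem_01 ha hx⟩

/-- degree zero part -/
def part0 (J : Ideal R) : AddSubgroup R := J.toAddSubgroup ⊓ G.R0

/-- degree one part -/
def part1 (J : Ideal R) : AddSubgroup R := J.toAddSubgroup ⊓ G.R1

theorem part0_ideal (J : Ideal R) : G.IsIdeal0 (G.part0 J) :=
  ⟨fun _ h => h.2, fun a ha _ hx => ⟨J.mul_mem_left a hx.1, G.mul_mem_00 ha hx.2⟩⟩

theorem part1_sub (J : Ideal R) : G.IsSubmodule1 (G.part1 J) :=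
  ⟨fun _ h => h.2, fun a ha _ hx => ⟨J.mul_mem_left a hx.1, G.mul_mem_01 ha hx.2⟩⟩

theorem part0_le_residual (J : Ideal R) : G.part0 J ≤ G.residual (G.part1 J) :=
  fun _ ha => ⟨ha.2, fun r hr => ⟨J.mul_mem_right r ha.1, G.mul_mem_01 ha.2 hr⟩⟩

theorem mul_mem_sq {r s : R} (hr : r ∈ G.R1) (hs : s ∈ G.R1) : r * s ∈ G.sq :=
  AddSubgroup.subset_closure ⟨r, hr, s, hs, rfl⟩

theorem sq_le {I : AddSubgroup R} (h : ∀ r ∈ G.R1, ∀ s ∈ G.R1, r * s ∈ I) : G.sq ≤ I := by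
  refine (AddSubgroup.closure_le _).2 ?_
  rintro _ ⟨r, hr, s, hs, rfl⟩
  exact h r hr s hs

theorem forward (Q : Ideal R) (h : G.IsGradedMaximal Q) :
      (∃ p : AddSubgroup R, G.IsMaximal0 p ∧ (G.sq : Set R) ⊆ ↑p ∧
        (Q : Set R) = setSum ↑p ↑G.R1) ∨
      (∃ N : AddSubgroup R, G.IsMaximalSubmodule1 N ∧ ¬ ((G.cube : Set R) ⊆ ↑N) ∧
        (Q : Set R) = setSum ↑(G.residual N) ↑N) := by
  obtain ⟨hQ, hne, hmax⟩ := h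
  have h1Q : (1 : R) ∉ Q := fun h => hne ((Ideal.eq_top_iff_one _).2 h)
  by_cases hR : ∀ r ∈ G.R1, r ∈ Q
  · left
    have hsq : G.sq ≤ G.part0 Q :=
      G.sq_le fun r hr s hs => ⟨Q.mul_mem_right s (hR r hr), G.mul_mem_11 hr hs⟩
    refine ⟨G.part0 Q, ⟨G.part0_ideal Q, ?_, ?_⟩, hsq, ?_⟩
    · intro he
      have : (1 : R) ∈ (G.part0 Q : Set R) := by rw [he]; exact G.one_mem
      exact h1Q this.1
    · intro I hI hle
      have key := hmax (G.mkIdeal I G.R1 hI G.R1_sub (fun a ha r hr => G.mul_mem_01 (hI.1 ha) hr)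
        (fun n hn r hr => hle (hsq (G.mul_mem_sq hn hr)))) (G.mkIdeal_graded _ _ _ _ _ _) ?_
      · rcases key with key | key
        · left
          refine Set.Subset.antisymm ?_ hle
          intro x hx
          refine ⟨?_, hI.1 hx⟩
          change x ∈ Q
          rw [← key]
          exact ⟨x, hx, 0, G.R1.zero_mem, by simp⟩
        · right
          refine Set.Subset.antisymm hI.1 ?_
          intro x hx
          have : x ∈ (⊤ : Ideal R) := trivial
          rw [← key] at this
          exact G.aux_left hI.1 (fun _ h => h) hx this
      · intro x hx
        obtain ⟨a, b, ha, hb, haQ, hbQ, rfl⟩ := hQ x hx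
        exact ⟨a, hle ⟨haQ, ha⟩, b, hb, rfl⟩
    · ext x
      constructor
      · intro hx
        obtain ⟨a, b, ha, hb, haQ, hbQ, rfl⟩ := hQ x hx
        exact ⟨a, ⟨haQ, ha⟩, b, hb, rfl⟩
      · rintro ⟨a, ha, b, hb, rfl⟩
        exact Q.add_mem ha.1 (hR b hb)
  · right
    have hN := G.part1_sub Q
    have hle : ∀ N' : AddSubgroup R, ∀ hN' : G.IsSubmodule1 N', G.part1 Q ≤ N' →
        Q ≤ G.resIdeal N' hN' := by
      intro N' hN' hl x hx
      obtain ⟨a, b, ha, hb, haQ, hbQ, rfl⟩ := hQ x hx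
      exact ⟨a, ⟨ha, fun r hr => hl ((G.part0_le_residual Q ⟨haQ, ha⟩).2 r hr)⟩,
        b, hl ⟨hbQ, hb⟩, rfl⟩
    have htop : ∀ N' : AddSubgroup R, ∀ hN' : G.IsSubmodule1 N', G.resIdeal N' hN' = ⊤ →
        (N' : Set R) = G.R1 := by
      intro N' hN' ht
      refine Set.Subset.antisymm hN'.1 fun x hx => ?_
      have : x ∈ (⊤ : Ideal R) := trivial
      rw [← ht] at this
      exact G.aux_right (G.residual_ideal N' hN').1 hN'.1 hx this
    have hneR : (G.part1 Q : Set R) ≠ G.R1 := by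
      intro he
      refine hR fun r hr => ?_
      have : r ∈ (G.part1 Q : Set R) := by rw [he]; exact hr
      exact this.1
    have hQeq : G.resIdeal _ hN = Q :=
      (hmax _ (G.mkIdeal_graded _ _ _ _ _ _) (hle _ hN le_rfl)).resolve_right
        fun ht => hneR (htop _ hN ht)
    refine ⟨G.part1 Q, ⟨hN, hneR, ?_⟩, ?_, ?_⟩
    · intro N' hN' hl
      rcases hmax (G.resIdeal N' hN') (G.mkIdeal_graded _ _ _ _ _ _) (hle N' hN' hl) with k | k
      · left
        refine Set.Subset.antisymm (fun x hx => ⟨?_, hN'.1 hx⟩) hl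
        change x ∈ Q
        rw [← k]
        exact ⟨0, AddSubgroup.zero_mem _, x, hx, by simp⟩
      · exact Or.inr (htop _ _ k)
    · intro hc
      have hsqQ : ∀ r ∈ G.R1, ∀ s ∈ G.R1, r * s ∈ G.part0 Q := by
        intro r hr s hs
        refine ⟨?_, G.mul_mem_11 hr hs⟩
        change r * s ∈ Q
        rw [← hQeq]
        exact ⟨r * s, ⟨G.mul_mem_11 hr hs, fun t ht =>
          hc (AddSubgroup.subset_closure ⟨r * s, G.mul_mem_sq hr hs, t, ht, rfl⟩)⟩,
          0, AddSubgroup.zero_mem _, by simp⟩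
      rcases hmax (G.mkIdeal (G.part0 Q) G.R1 (G.part0_ideal Q) G.R1_sub
        (fun a ha r hr => G.mul_mem_01 ha.2 hr) hsqQ) (G.mkIdeal_graded _ _ _ _ _ _) (by
          intro x hx
          obtain ⟨a, b, ha, hb, haQ, hbQ, rfl⟩ := hQ x hx
          exact ⟨a, ⟨haQ, ha⟩, b, hb, rfl⟩) with k | k
      · refine hR fun r hr => ?_
        rw [← k]
        exact ⟨0, AddSubgroup.zero_mem _, r, hr, by simp⟩
      · have : (1 : R) ∈ (⊤ : Ideal R) := trivial
        rw [← k] at this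
        exact h1Q (G.aux_left (G.part0_ideal Q).1 (fun _ h => h) G.one_mem this).1
    · conv_lhs => rw [← hQeq]
      rfl

theorem backward1 (Q : Ideal R) (hQ : G.IsGradedIdeal Q) (p : AddSubgroup R)
    (hp : G.IsMaximal0 p) (he : (Q : Set R) = setSum ↑p ↑G.R1) : G.IsGradedMaximal Q := by
  obtain ⟨hI, hne, hmax⟩ := hp
  have hmem : ∀ x, x ∈ Q ↔ x ∈ setSum (p : Set R) (G.R1 : Set R) := fun x => by
    rw [← he]; rfl
  refine ⟨hQ, ?_, ?_⟩
  · rintro rfl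
    exact hne (Set.Subset.antisymm hI.1 fun x hx =>
      G.aux_left hI.1 (fun _ h => h) hx ((hmem x).1 trivial))
  · intro J hJ hle
    have hpJ : p ≤ G.part0 J := fun x hx =>
      ⟨hle ((hmem x).2 ⟨x, hx, 0, G.R1.zero_mem, by simp⟩), hI.1 hx⟩
    rcases hmax _ (G.part0_ideal J) hpJ with k | k
    · left
      refine le_antisymm (fun x hx => ?_) hle
      obtain ⟨a, b, ha, hb, haQ, hbQ, rfl⟩ := hJ x hx
      have : a ∈ (G.part0 J : Set R) := ⟨haQ, ha⟩
      rw [k] at this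
      exact (hmem _).2 ⟨a, this, b, hb, rfl⟩
    · right
      have : (1 : R) ∈ (G.part0 J : Set R) := by rw [k]; exact G.one_mem
      exact (Ideal.eq_top_iff_one _).2 this.1

theorem backward2 (Q : Ideal R) (hQ : G.IsGradedIdeal Q) (N : AddSubgroup R)
    (hp : G.IsMaximalSubmodule1 N) (hc : ¬ ((G.cube : Set R) ⊆ ↑N))
    (he : (Q : Set R) = setSum ↑(G.residual N) ↑N) : G.IsGradedMaximal Q := by
  obtain ⟨hN, hne, hmax⟩ := hp
  have hI := G.residual_ideal N hN
  have hmem : ∀ x, x ∈ Q ↔ x ∈ setSum (G.residual N : Set R) (N : Set R) := fun x => by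
    rw [← he]; rfl
  refine ⟨hQ, ?_, ?_⟩
  · rintro rfl
    exact hne (Set.Subset.antisymm hN.1 fun x hx =>
      G.aux_right hI.1 hN.1 hx ((hmem x).1 trivial))
  · intro J hJ hle
    have hNJ : N ≤ G.part1 J := fun x hx =>
      ⟨hle ((hmem x).2 ⟨0, AddSubgroup.zero_mem _, x, hx, by simp⟩), hN.1 hx⟩
    have hrJ : ∀ x ∈ G.residual N, x ∈ J := fun x hx =>
      hle ((hmem x).2 ⟨x, hx, 0, N.zero_mem, by simp⟩)
    rcases hmax _ (G.part1_sub J) hNJ with k | k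
    · left
      refine le_antisymm (fun x hx => ?_) hle
      obtain ⟨a, b, ha, hb, haQ, hbQ, rfl⟩ := hJ x hx
      have hk : G.part1 J = N := SetLike.coe_injective k
      have h0 := G.part0_le_residual J ⟨haQ, ha⟩
      have h1 : b ∈ G.part1 J := ⟨hbQ, hb⟩
      rw [hk] at h0 h1
      exact (hmem _).2 ⟨a, h0, b, h1, rfl⟩
    · right
      have hR : ∀ r ∈ G.R1, r ∈ J := fun r hr => by
        have : r ∈ (G.part1 J : Set R) := by rw [k]; exact hr
        exact this.1
      have hsq : G.sq ≤ G.part0 J :=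
        G.sq_le fun r hr s hs => ⟨J.mul_mem_right s (hR r hr), G.mul_mem_11 hr hs⟩
      obtain ⟨s, hs, r, hr, hsr⟩ : ∃ s ∈ G.sq, ∃ r ∈ G.R1, s * r ∉ N := by
        by_contra! hcon
        refine hc ((AddSubgroup.closure_le _).2 ?_)
        rintro _ ⟨a, ha, b, hb, rfl⟩
        exact hcon a ha b hb
      have hs0 : s ∈ G.R0 := (hsq hs).2
      have hsJ : s ∈ J := (hsq hs).1
      -- the submodule `N + R₀ s r`
      let M : AddSubgroup R :=
        { carrier := {x | ∃ n ∈ N, ∃ a ∈ G.R0, x = n + a * (s * r)}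
          zero_mem' := ⟨0, N.zero_mem, 0, G.R0.zero_mem, by simp⟩
          add_mem' := by
            rintro _ _ ⟨n, hn, a, ha, rfl⟩ ⟨m, hm, b, hb, rfl⟩
            exact ⟨n + m, N.add_mem hn hm, a + b, G.R0.add_mem ha hb, by ring⟩
          neg_mem' := by
            rintro _ ⟨n, hn, a, ha, rfl⟩
            exact ⟨-n, N.neg_mem hn, -a, G.R0.neg_mem ha, by ring⟩ }
      have hM : G.IsSubmodule1 M := by
        constructor
        · rintro _ ⟨n, hn, a, ha, rfl⟩
          exact G.R1.add_mem (hN.1 hn) (G.mul_mem_01 ha (G.mul_mem_01 hs0 hr))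
        · rintro c hc _ ⟨n, hn, a, ha, rfl⟩
          exact ⟨c * n, hN.2 c hc n hn, c * a, G.mul_mem_00 hc ha, by ring⟩
      have hNM : N ≤ M := fun n hn => ⟨n, hn, 0, G.R0.zero_mem, by simp⟩
      have hMtop : (M : Set R) = G.R1 := by
        refine (hmax M hM hNM).resolve_left fun hEq => hsr ?_
        have : s * r ∈ (M : Set R) := ⟨0, N.zero_mem, 1, G.one_mem, by simp⟩
        rw [hEq] at this
        exact this
      have hall : ∀ t ∈ G.R1, ∃ n ∈ N, ∃ a ∈ G.R0, t = n + a * (s * r) := by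
        intro t ht
        have : t ∈ (M : Set R) := by rw [hMtop]; exact ht
        exact this
      obtain ⟨n, hn, a, ha, hra⟩ := hall r hr
      have hu0 : 1 - a * s ∈ G.R0 := G.R0.sub_mem G.one_mem (G.mul_mem_00 ha hs0)
      have hu : 1 - a * s ∈ G.residual N := by
        refine ⟨hu0, fun t ht => ?_⟩
        obtain ⟨m, hm, b, hb, rfl⟩ := hall t ht
        have e : (1 - a * s) * (m + b * (s * r)) = (1 - a * s) * m + (b * s) * n := by
          linear_combination (b * s) * hra
        rw [e]
        exact N.add_mem (hN.2 _ hu0 m hm) (hN.2 _ (G.mul_mem_00 hb hs0) n hn)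
      have : (1 : R) = (1 - a * s) + a * s := by ring
      rw [Ideal.eq_top_iff_one, this]
      exact J.add_mem (hrJ _ hu) (J.mul_mem_left a hsJ)

end Z2Grading

/-- a `ℤ₂`-graded ideal `Q` is `ℤ₂`-graded maximal iff either `Q = p + R₁`
with `p` a maximal ideal of `R₀` containing `R₁²`, or `Q = (R' :_{R₀} R₁) + R'` with `R'` a
maximal `R₀`-submodule of `R₁` such that `R₁³ ⊄ R'`. -/
theorem graded_maximal_iff {R : Type*} [CommRing R] (G : Z2Grading R) (Q : Ideal R)
    (hQ : G.IsGradedIdeal Q) :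
    G.IsGradedMaximal Q ↔
      (∃ p : AddSubgroup R, G.IsMaximal0 p ∧ (G.sq : Set R) ⊆ ↑p ∧
        (Q : Set R) = setSum ↑p ↑G.R1) ∨
      (∃ N : AddSubgroup R, G.IsMaximalSubmodule1 N ∧ ¬ ((G.cube : Set R) ⊆ ↑N) ∧
        (Q : Set R) = setSum ↑(G.residual N) ↑N) := by
  constructor
  · exact G.forward Q
  · rintro (⟨p, hp, -, he⟩ | ⟨N, hN, hc, he⟩)
    · exact G.backward1 Q hQ p hp he
    · exact G.backward2 Q hQ N hN hc he
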